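/- Isometry of the Hilbert simplex geometry with a normed vector space: the map v : Δ_d → V^d, defined coordinatewise by v(p)_i := log p_i − (1/d) ∑_{j=1}^d log p_j, is a bijection from the open standard simplex Δ_d onto the zero-sum hyperplane V^d := {w ∈ ℝ^d : ∑_i w_i = 0}, with inverse given by the softmax map w ↦ (exp(w_i) / ∑_j exp(w_j))_i; moreover it is an isometry: for all p, q ∈ Δ_d, ρ_HG(p, q) = ‖v(p) − v(q)‖_var. -/

import Mathlib

/-- The open standard simplex: all coordinates positive and summing to 1. -/
def stdSimplexOpen {d : ℕ} (p : Fin d → ℝ) : Prop :=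
  (∀ i, 0 < p i) ∧ ∑ i, p i = 1

/-- The Hilbert projective distance ρ_HG(p,q) = log ( max_i (p_i/q_i) / min_j (p_j/q_j) ). -/
noncomputable def hilbertProjDist {d : ℕ} (p q : Fin d → ℝ) : ℝ :=
  Real.log ((⨆ i, p i / q i) / (⨅ j, p j / q j))

/-- The variation norm ‖x‖_var = max_i x_i − min_i x_i. -/
noncomputable def varNorm {d : ℕ} (x : Fin d → ℝ) : ℝ :=
  (⨆ i, x i) - (⨅ i, x i)

/-- The centered-log embedding v(p)_i = log p_i − (1/d) ∑_j log p_j. -/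
noncomputable def clogMap {d : ℕ} (p : Fin d → ℝ) : Fin d → ℝ :=
  fun i => Real.log (p i) - (1 / (d : ℝ)) * ∑ j, Real.log (p j)

/-- The softmax map w ↦ (exp w_i / ∑_j exp w_j)_i. -/
noncomputable def softmaxMap {d : ℕ} (w : Fin d → ℝ) : Fin d → ℝ :=
  fun i => Real.exp (w i) / ∑ j, Real.exp (w j)

/-!
In logarithmic coordinates the Hilbert distance of two positive vectors is the variation norm of
the difference, since `exp` is increasing and continuous and so commutes with finite maxima and
minima. The variation norm does not see constant vectors, so the logarithms may be replaced by
their projections to the zero-sum hyperplane, which are the centered logarithms. Softmax is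
likewise insensitive to adding constants, and centered logarithms to positive rescaling; this makes
the two maps mutually inverse once a representative is fixed on each ray (sum one) and in each
class modulo constants (sum zero).
-/

section Balance

variable {ι G : Type*} [Fintype ι] [AddCommGroup G] [Module ℚ≥0 G]

theorem balance_const (a : G) : Fintype.balance (Function.const ι a) = 0 := by
  ext i
  have : Nonempty ι := ⟨i⟩
  simp [Fintype.balance_apply]

theorem balance_eq_self_of_sum_eq_zero {f : ι → G} (hf : ∑ i, f i = 0) :
    Fintype.balance f = f := by
  ext i
  simp [Fintype.balance_apply, Finset.expect, hf]

end Balance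

section CenteredLog

variable {d : ℕ}

theorem clogMap_eq_balance_log (p : Fin d → ℝ) :
    clogMap p = Fintype.balance fun i => Real.log (p i) := by
  ext i
  rw [clogMap, Fintype.balance_apply, Fintype.expect_eq_sum_div_card, Fintype.card_fin,
    one_div_mul_eq_div]

theorem sum_clogMap (p : Fin d → ℝ) : ∑ i, clogMap p i = 0 := by
  rw [clogMap_eq_balance_log, Fintype.sum_balance]

theorem clogMap_exp (w : Fin d → ℝ) :
    clogMap (fun i => Real.exp (w i)) = Fintype.balance w := by
  simp only [clogMap_eq_balance_log, Real.log_exp]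

theorem clogMap_smul {c : ℝ} (hc : c ≠ 0) {p : Fin d → ℝ} (hp : ∀ i, p i ≠ 0) :
    clogMap (c • p) = clogMap p := by
  have log_smul : (fun i => Real.log ((c • p) i)) =
      Function.const (Fin d) (Real.log c) + fun i => Real.log (p i) := by
    ext i
    exact Real.log_mul hc (hp i)
  rw [clogMap_eq_balance_log, log_smul, Fintype.balance_add, balance_const, zero_add,
    clogMap_eq_balance_log]

end CenteredLog

section Softmax

variable {d : ℕ}

theorem sum_exp_pos [NeZero d] (w : Fin d → ℝ) : 0 < ∑ i, Real.exp (w i) :=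
  Finset.sum_pos (fun i _ => Real.exp_pos (w i)) Finset.univ_nonempty

theorem softmaxMap_eq_smul_exp (w : Fin d → ℝ) :
    softmaxMap w = (∑ i, Real.exp (w i))⁻¹ • fun i => Real.exp (w i) := by
  ext i
  exact div_eq_inv_mul _ _

theorem stdSimplexOpen_softmaxMap [NeZero d] (w : Fin d → ℝ) : stdSimplexOpen (softmaxMap w) := by
  refine ⟨fun i => div_pos (Real.exp_pos _) (sum_exp_pos w), ?_⟩
  simp only [softmaxMap]
  rw [← Finset.sum_div, div_self (sum_exp_pos w).ne']

theorem softmaxMap_sub_const (w : Fin d → ℝ) (c : ℝ) :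
    softmaxMap (w - Function.const (Fin d) c) = softmaxMap w := by
  ext i
  simp only [softmaxMap, Pi.sub_apply, Function.const_apply, Real.exp_sub]
  rw [← Finset.sum_div, div_div_div_cancel_right₀ (Real.exp_ne_zero c)]

theorem softmaxMap_log {p : Fin d → ℝ} (hp : ∀ i, 0 < p i) :
    softmaxMap (fun i => Real.log (p i)) = (∑ i, p i)⁻¹ • p := by
  simp only [softmaxMap_eq_smul_exp, Real.exp_log (hp _)]

theorem softmaxMap_clogMap {p : Fin d → ℝ} (hp : ∀ i, 0 < p i) :
    softmaxMap (clogMap p) = (∑ i, p i)⁻¹ • p := by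
  rw [clogMap_eq_balance_log, Fintype.balance, softmaxMap_sub_const, softmaxMap_log hp]

theorem clogMap_softmaxMap [NeZero d] (w : Fin d → ℝ) :
    clogMap (softmaxMap w) = Fintype.balance w := by
  rw [softmaxMap_eq_smul_exp, clogMap_smul (inv_ne_zero (sum_exp_pos w).ne')
    fun i => Real.exp_ne_zero (w i), clogMap_exp]

end Softmax

section Isometry

variable {d : ℕ} [NeZero d]

theorem varNorm_sub_const (x : Fin d → ℝ) (c : ℝ) :
    varNorm (x - Function.const (Fin d) c) = varNorm x := by
  simp only [varNorm, Pi.sub_apply, Function.const_apply]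
  rw [← ciSup_sub (Set.finite_range x).bddAbove, ← ciInf_sub (Set.finite_range x).bddBelow,
    sub_sub_sub_cancel_right]

theorem varNorm_balance (x : Fin d → ℝ) : varNorm (Fintype.balance x) = varNorm x :=
  varNorm_sub_const x _

theorem hilbertProjDist_exp (x y : Fin d → ℝ) :
    hilbertProjDist (fun i => Real.exp (x i)) (fun i => Real.exp (y i)) = varNorm (x - y) := by
  have exp_iSup : Real.exp (⨆ i, (x - y) i) = ⨆ i, Real.exp ((x - y) i) :=
    Real.exp_monotone.map_ciSup_of_continuousAt Real.continuous_exp.continuousAt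
      (Set.finite_range _).bddAbove
  have exp_iInf : Real.exp (⨅ i, (x - y) i) = ⨅ i, Real.exp ((x - y) i) :=
    Real.exp_monotone.map_ciInf_of_continuousAt Real.continuous_exp.continuousAt
      (Set.finite_range _).bddBelow
  calc hilbertProjDist (fun i => Real.exp (x i)) (fun i => Real.exp (y i))
      = Real.log ((⨆ i, Real.exp ((x - y) i)) / ⨅ i, Real.exp ((x - y) i)) := by
        simp only [hilbertProjDist, Pi.sub_apply, Real.exp_sub]
    _ = varNorm (x - y) := by
        rw [← exp_iSup, ← exp_iInf, ← Real.exp_sub, Real.log_exp, varNorm]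

theorem hilbertProjDist_eq_varNorm_clogMap_sub {p q : Fin d → ℝ} (hp : ∀ i, 0 < p i)
    (hq : ∀ i, 0 < q i) : hilbertProjDist p q = varNorm (clogMap p - clogMap q) :=
  calc hilbertProjDist p q
      = hilbertProjDist (fun i => Real.exp (Real.log (p i)))
          (fun i => Real.exp (Real.log (q i))) := by
        simp only [Real.exp_log (hp _), Real.exp_log (hq _)]
    _ = varNorm ((fun i => Real.log (p i)) - fun i => Real.log (q i)) := hilbertProjDist_exp _ _
    _ = varNorm (clogMap p - clogMap q) := by
        rw [clogMap_eq_balance_log, clogMap_eq_balance_log, ← Fintype.balance_sub, varNorm_balance]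

end Isometry

theorem clogMap_isometry_simplex_varNorm_general {d : ℕ} (hd : 0 < d) :
    (∀ p : Fin d → ℝ, (∀ i, 0 < p i) →
      (∑ i, clogMap p i = 0) ∧ softmaxMap (clogMap p) = (∑ i, p i)⁻¹ • p) ∧
    (∀ w : Fin d → ℝ,
      stdSimplexOpen (softmaxMap w) ∧ clogMap (softmaxMap w) = Fintype.balance w) ∧
    (∀ p q : Fin d → ℝ, (∀ i, 0 < p i) → (∀ i, 0 < q i) →
      hilbertProjDist p q = varNorm (clogMap p - clogMap q)) := by
  have : NeZero d := .of_pos hd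
  exact ⟨fun p hp => ⟨sum_clogMap p, softmaxMap_clogMap hp⟩,
    fun w => ⟨stdSimplexOpen_softmaxMap w, clogMap_softmaxMap w⟩,
    fun _ _ hp hq => hilbertProjDist_eq_varNorm_clogMap_sub hp hq⟩

/-- The centered-log map is a bijection from the open standard simplex onto the zero-sum
hyperplane, with inverse the softmax map, and it is an isometry from the Hilbert simplex
distance to the variation norm. -/
theorem clogMap_isometry_simplex_varNorm {d : ℕ} (hd : 0 < d) :
    (∀ p : Fin d → ℝ, stdSimplexOpen p →
      (∑ i, clogMap p i = 0) ∧ softmaxMap (clogMap p) = p) ∧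
    (∀ w : Fin d → ℝ, ∑ i, w i = 0 →
      stdSimplexOpen (softmaxMap w) ∧ clogMap (softmaxMap w) = w) ∧
    (∀ p q : Fin d → ℝ, stdSimplexOpen p → stdSimplexOpen q →
      hilbertProjDist p q = varNorm (clogMap p - clogMap q)) := by
  obtain ⟨clog, softmax, isometry⟩ := clogMap_isometry_simplex_varNorm_general hd
  exact ⟨fun p hp => by simpa [hp.2] using clog p hp.1,
    fun w hw => by simpa [balance_eq_self_of_sum_eq_zero hw] using softmax w,
    fun p q hp hq => isometry p q hp.1 hq.1⟩
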